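/- arXiv:2603.21773 — 2 statements merged into one kernel-verified Lean document; each statement's English description precedes it below -/
import Mathlib

section
/- Let m ≥ 1 be an integer, θ0 ∈ (0, π/(2m)), and let L ∈ A be invertible with σ(L) ⊆ S(θ0). Then for every z ∈ S(θ0) with z ∉ σ(L), the elements L − z, L^{-m} − z^{-m} and G_m(zL^{-1}) := ∑_{k=0}^{m-1} (zL^{-1})^k are all invertible, and the following resolvent identities hold: (L − z)^{-1} = −z^{-m} · L^{-1} · G_m(zL^{-1}) · (L^{-m} − z^{-m})^{-1}, and (L − z)^{-1} = −z^{-1}·1 − m z^{-1-m} (L^{-m} − z^{-m})^{-1} − z^{-1} ∑_{k=1}^{m-1} G_k(zL^{-1}) · G_m(zL^{-1})^{-1}. -/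
/-- The closed sector (origin removed) of half-angle `θ0` around the positive real axis:
`S(θ0) = {ρ e^{iθ} : ρ > 0, |θ| ≤ θ0}`. -/
def sector (θ0 : ℝ) : Set ℂ :=
  {z : ℂ | ∃ ρ θ : ℝ, 0 < ρ ∧ |θ| ≤ θ0 ∧ z = ρ * Complex.exp (θ * Complex.I)}

/-!
Put `T = z L⁻¹`. Then `L - z = -(T - 1) L` and `L⁻ᵐ - z⁻ᵐ = z⁻ᵐ (Tᵐ - 1)`, so both identities are
identities for `(T - 1)⁻¹`. The first is the factorisation `Tᵐ - 1 = (T - 1) G_m(T)`; the second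
comes from summing `G_k(T) (T - 1) = Tᵏ - 1` over `k < m`, which gives
`G_m(T) = m + (∑ₖ G_k(T)) (T - 1)`, and dividing by `Tᵐ - 1`.

All inverses exist as soon as `Tᵐ - 1` is a unit, i.e. `zᵐ ∉ σ(Lᵐ) = σ(L)ᵐ`. This follows from
`z ∉ σ(L)` because `w ↦ wᵐ` is injective on a sector of half-angle less than `π / m`.
-/

open scoped Ring

section Sector

variable {θ0 : ℝ} {z : ℂ}

lemma ne_zero_of_mem_sector (hz : z ∈ sector θ0) : z ≠ 0 := by
  obtain ⟨ρ, θ, hρ, -, rfl⟩ := hz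
  exact mul_ne_zero (by exact_mod_cast hρ.ne') (Complex.exp_ne_zero _)

lemma abs_arg_le_of_mem_sector (hz : z ∈ sector θ0) : |z.arg| ≤ θ0 := by
  rcases le_or_gt Real.pi θ0 with hπ | hπ
  · exact (Complex.abs_arg_le_pi z).trans hπ
  · obtain ⟨ρ, θ, hρ, hθ, rfl⟩ := hz
    have hθ_mem : θ ∈ Set.Ioc (-Real.pi) (-Real.pi + 2 * Real.pi) := by
      constructor <;> linarith [(abs_le.mp hθ).1, (abs_le.mp hθ).2]
    rwa [Complex.arg_real_mul _ hρ, Complex.arg_exp_mul_I, (toIocMod_eq_self _).mpr hθ_mem]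

lemma injOn_pow_sector {m : ℕ} (hm : m ≠ 0) (hθ0 : θ0 < Real.pi / m) :
    Set.InjOn (· ^ m) (sector θ0) := by
  refine Set.LeftInvOn.injOn (f₁' := (· ^ (m⁻¹ : ℂ))) fun z hz ↦ ?_
  have harg : |z.arg| < Real.pi / m := (abs_arg_le_of_mem_sector hz).trans_lt hθ0
  exact Complex.pow_cpow_nat_inv hm (abs_lt.mp harg).1 (abs_lt.mp harg).2.le

end Sector

lemma pow_notMem_spectrum_pow {K A : Type*} [Field K] [IsAlgClosed K] [Ring A] [Algebra K A]
    {a : A} {z : K} {S : Set K} {m : ℕ} (hm : m ≠ 0) (hS : Set.InjOn (· ^ m) S)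
    (ha : spectrum K a ⊆ S) (hz : z ∈ S) (hza : z ∉ spectrum K a) :
    z ^ m ∉ spectrum K (a ^ m) := by
  rw [spectrum.map_pow_of_pos a (Nat.pos_of_ne_zero hm)]
  rintro ⟨w, hw, hwz⟩
  exact hza (hS (ha hw) hz hwz ▸ hw)

section GeomSum

variable {R : Type*} [Ring R] {T : R} {m : ℕ}

lemma sum_geom_sum_mul_sub_one (T : R) (m : ℕ) :
    (∑ k ∈ Finset.range m, ∑ j ∈ Finset.range k, T ^ j) * (T - 1) =
      (∑ k ∈ Finset.range m, T ^ k) - m := by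
  rw [Finset.sum_mul]
  simp only [geom_sum_mul, Finset.sum_sub_distrib, Finset.sum_const, Finset.card_range, nsmul_one]

lemma isUnit_pow_sub_one_iff :
    IsUnit (T ^ m - 1) ↔ IsUnit (T - 1) ∧ IsUnit (∑ k ∈ Finset.range m, T ^ k) := by
  have hcomm : Commute (T - 1) (∑ k ∈ Finset.range m, T ^ k) :=
    (mul_geom_sum T m).trans (geom_sum_mul T m).symm
  rw [← hcomm.isUnit_mul_iff, mul_geom_sum]

lemma inverse_sub_one_eq_geom_sum_mul (h : IsUnit (T ^ m - 1)) :
    (T - 1)⁻¹ʳ = (∑ k ∈ Finset.range m, T ^ k) * (T ^ m - 1)⁻¹ʳ := by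
  obtain ⟨-, hG⟩ := isUnit_pow_sub_one_iff.mp h
  rw [← mul_geom_sum, Ring.inverse_mul (.inr hG), Ring.mul_inverse_cancel_left _ _ hG]

lemma inverse_sub_one_eq_natCast_mul_add (h : IsUnit (T ^ m - 1)) :
    (T - 1)⁻¹ʳ = m * (T ^ m - 1)⁻¹ʳ +
      (∑ k ∈ Finset.range m, ∑ j ∈ Finset.range k, T ^ j) *
        (∑ k ∈ Finset.range m, T ^ k)⁻¹ʳ := by
  obtain ⟨hT, hG⟩ := isUnit_pow_sub_one_iff.mp h
  set G := ∑ k ∈ Finset.range m, T ^ k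
  set H := ∑ k ∈ Finset.range m, ∑ j ∈ Finset.range k, T ^ j
  have hG_eq : G = m + H * (T - 1) := by
    rw [sum_geom_sum_mul_sub_one, add_sub_cancel]
  have hinv : (T ^ m - 1)⁻¹ʳ = (T - 1)⁻¹ʳ * G⁻¹ʳ := by
    rw [← geom_sum_mul, Ring.inverse_mul (.inr hT)]
  calc (T - 1)⁻¹ʳ = G * (T ^ m - 1)⁻¹ʳ := inverse_sub_one_eq_geom_sum_mul h
    _ = m * (T ^ m - 1)⁻¹ʳ + H * ((T - 1) * (T ^ m - 1)⁻¹ʳ) := by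
      rw [hG_eq, add_mul, mul_assoc]
    _ = m * (T ^ m - 1)⁻¹ʳ + H * G⁻¹ʳ := by
      rw [hinv, Ring.mul_inverse_cancel_left _ _ hT]

end GeomSum

section Resolvent

variable {K A : Type*} [Field K] [Ring A] [Algebra K A] {L : A} {z : K} {m : ℕ}

lemma isUnit_sub_smul_one_iff : IsUnit (L - z • (1 : A)) ↔ z ∉ spectrum K L := by
  rw [spectrum.notMem_iff, Algebra.algebraMap_eq_smul_one, IsUnit.sub_iff]

lemma inverse_smul_eq_inv_smul_inverse (c : K) (a : A) : (c • a)⁻¹ʳ = c⁻¹ • a⁻¹ʳ := by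
  rcases eq_or_ne c 0 with rfl | hc
  · simp only [zero_smul, inv_zero, Ring.inverse_zero]
  have hc_inv : (algebraMap K A c)⁻¹ʳ = algebraMap K A c⁻¹ :=
    Ring.inverse_unit (Units.map (algebraMap K A).toMonoidHom (Units.mk0 c hc))
  rw [Algebra.smul_def, Ring.inverse_mul (.inl (hc.isUnit.map _)), hc_inv,
    ← Algebra.commutes, ← Algebra.smul_def]

lemma sub_smul_one_eq_neg_one_smul_mul (hL : IsUnit L) :
    L - z • (1 : A) = (-1 : K) • ((z • L⁻¹ʳ - 1) * L) := by
  rw [sub_mul, smul_mul_assoc, Ring.inverse_mul_cancel L hL, one_mul, neg_one_smul, neg_sub]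

lemma inverse_sub_smul_one (hL : IsUnit L) :
    (L - z • (1 : A))⁻¹ʳ = -(L⁻¹ʳ * (z • L⁻¹ʳ - 1)⁻¹ʳ) := by
  rw [sub_smul_one_eq_neg_one_smul_mul hL, inverse_smul_eq_inv_smul_inverse,
    Ring.inverse_mul (.inr hL), inv_neg_one, neg_one_smul]

lemma pow_sub_zpow_neg_smul_one (hz : z ≠ 0) (a : A) :
    a ^ m - z ^ (-(m : ℤ)) • (1 : A) = z ^ (-(m : ℤ)) • ((z • a) ^ m - 1) := by
  rw [smul_pow, smul_sub, smul_smul, zpow_neg, zpow_natCast, inv_mul_cancel₀ (pow_ne_zero m hz),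
    one_smul]

lemma inverse_pow_sub_zpow_neg_smul_one (hz : z ≠ 0) (a : A) :
    (a ^ m - z ^ (-(m : ℤ)) • (1 : A))⁻¹ʳ = z ^ m • ((z • a) ^ m - 1)⁻¹ʳ := by
  rw [pow_sub_zpow_neg_smul_one hz, inverse_smul_eq_inv_smul_inverse, zpow_neg, inv_inv,
    zpow_natCast]

lemma isUnit_smul_inverse_pow_sub_one (hL : IsUnit L) (h : z ^ m ∉ spectrum K (L ^ m)) :
    IsUnit ((z • L⁻¹ʳ) ^ m - 1) := by
  have hfactor : (z • L⁻¹ʳ) ^ m - 1 = (z ^ m • (1 : A) - L ^ m) * (L ^ m)⁻¹ʳ := by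
    rw [sub_mul, Ring.mul_inverse_cancel _ (hL.pow m), smul_one_mul, smul_pow, Ring.inverse_pow]
  rw [hfactor]
  have hsub : IsUnit (z ^ m • (1 : A) - L ^ m) :=
    IsUnit.sub_iff.mp (isUnit_sub_smul_one_iff.mpr h)
  exact hsub.mul (hL.pow m).ringInverse

theorem inverse_sub_smul_one_eq_geom_sum_mul (hL : IsUnit L) (hz : z ≠ 0)
    (h : IsUnit ((z • L⁻¹ʳ) ^ m - 1)) :
    (L - z • (1 : A))⁻¹ʳ =
      -(z ^ (-(m : ℤ))) • (L⁻¹ʳ * (∑ k ∈ Finset.range m, (z • L⁻¹ʳ) ^ k) *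
        (L⁻¹ʳ ^ m - z ^ (-(m : ℤ)) • (1 : A))⁻¹ʳ) := by
  rw [inverse_sub_smul_one hL, inverse_sub_one_eq_geom_sum_mul h,
    inverse_pow_sub_zpow_neg_smul_one hz, mul_smul_comm, neg_smul, smul_smul, zpow_neg,
    zpow_natCast, inv_mul_cancel₀ (pow_ne_zero m hz), one_smul, mul_assoc]

theorem inverse_sub_smul_one_eq_sum_geom_sum (hL : IsUnit L) (hz : z ≠ 0)
    (h : IsUnit ((z • L⁻¹ʳ) ^ m - 1)) :
    (L - z • (1 : A))⁻¹ʳ =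
      (-z⁻¹) • (1 : A)
        - ((m : K) * z ^ (-1 - (m : ℤ))) • (L⁻¹ʳ ^ m - z ^ (-(m : ℤ)) • (1 : A))⁻¹ʳ
        - z⁻¹ • ((∑ k ∈ Finset.range m, ∑ j ∈ Finset.range k, (z • L⁻¹ʳ) ^ j) *
            (∑ j ∈ Finset.range m, (z • L⁻¹ʳ) ^ j)⁻¹ʳ) := by
  obtain ⟨hT, -⟩ := isUnit_pow_sub_one_iff.mp h
  have hcoeff : (m : K) * z ^ (-1 - (m : ℤ)) * z ^ m = z⁻¹ * m := by
    rw [mul_assoc, ← zpow_natCast, ← zpow_add₀ hz, sub_add_cancel, zpow_neg_one, mul_comm]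
  have hL_inv : L⁻¹ʳ = z⁻¹ • (1 + (z • L⁻¹ʳ - 1)) := by
    rw [add_sub_cancel, inv_smul_smul₀ hz]
  have hinv : (L - z • (1 : A))⁻¹ʳ = -(z⁻¹ • ((z • L⁻¹ʳ - 1)⁻¹ʳ + 1)) := by
    rw [inverse_sub_smul_one hL]
    nth_rw 1 [hL_inv]
    rw [smul_mul_assoc, add_mul, one_mul, Ring.mul_inverse_cancel _ hT]
  rw [hinv, inverse_sub_one_eq_natCast_mul_add h, inverse_pow_sub_zpow_neg_smul_one hz, smul_smul,
    hcoeff, mul_smul, Nat.cast_smul_eq_nsmul, nsmul_eq_mul]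
  module

end Resolvent

theorem stmt3_general {A : Type*} [Ring A] [Algebra ℂ A] {m : ℕ} (hm : 1 ≤ m) {θ0 : ℝ}
    (hθ0 : θ0 < Real.pi / m) {L : A} (hL : IsUnit L) (hσ : spectrum ℂ L ⊆ sector θ0) :
    ∀ z ∈ sector θ0, z ∉ spectrum ℂ L →
      IsUnit (L - z • (1 : A)) ∧
      IsUnit (L⁻¹ʳ ^ m - z ^ (-(m : ℤ)) • (1 : A)) ∧
      IsUnit (∑ k ∈ Finset.range m, (z • L⁻¹ʳ) ^ k) ∧
      (L - z • (1 : A))⁻¹ʳ =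
        -(z ^ (-(m : ℤ))) • (L⁻¹ʳ * (∑ k ∈ Finset.range m, (z • L⁻¹ʳ) ^ k) *
          (L⁻¹ʳ ^ m - z ^ (-(m : ℤ)) • (1 : A))⁻¹ʳ) ∧
      (L - z • (1 : A))⁻¹ʳ =
        (-z⁻¹) • (1 : A)
          - ((m : ℂ) * z ^ (-1 - (m : ℤ))) • (L⁻¹ʳ ^ m - z ^ (-(m : ℤ)) • (1 : A))⁻¹ʳ
          - z⁻¹ • ∑ k ∈ Finset.Ico 1 m, (∑ j ∈ Finset.range k, (z • L⁻¹ʳ) ^ j) *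
              (∑ j ∈ Finset.range m, (z • L⁻¹ʳ) ^ j)⁻¹ʳ := by
  intro z hz hzσ
  have hm0 : m ≠ 0 := Nat.one_le_iff_ne_zero.mp hm
  have hz0 : z ≠ 0 := ne_zero_of_mem_sector hz
  have hTm : IsUnit ((z • L⁻¹ʳ) ^ m - 1) := isUnit_smul_inverse_pow_sub_one hL
    (pow_notMem_spectrum_pow hm0 (injOn_pow_sector hm0 hθ0) hσ hz hzσ)
  have hsum (X : A) :
      ∑ k ∈ Finset.Ico 1 m, (∑ j ∈ Finset.range k, (z • L⁻¹ʳ) ^ j) * X =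
        (∑ k ∈ Finset.range m, ∑ j ∈ Finset.range k, (z • L⁻¹ʳ) ^ j) * X := by
    rw [← Finset.sum_mul, Finset.sum_range_eq_add_Ico _ hm, Finset.sum_range_zero, zero_add]
  refine ⟨isUnit_sub_smul_one_iff.mpr hzσ, ?_, (isUnit_pow_sub_one_iff.mp hTm).2,
    inverse_sub_smul_one_eq_geom_sum_mul hL hz0 hTm, ?_⟩
  · rw [pow_sub_zpow_neg_smul_one hz0]
    exact hTm.smul (Units.mk0 _ (zpow_ne_zero _ hz0))
  · rw [hsum]
    exact inverse_sub_smul_one_eq_sum_geom_sum hL hz0 hTm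

/-- Let `A` be a complex unital Banach algebra, `m ≥ 1`,
`θ0 ∈ (0, π/(2m))`, and `L ∈ A` invertible with `σ(L) ⊆ S(θ0)`. Then for every
`z ∈ S(θ0)` with `z ∉ σ(L)`, the elements `L - z`, `L^{-m} - z^{-m}` and
`G_m(zL⁻¹) = ∑_{k=0}^{m-1} (zL⁻¹)^k` are all invertible, and
`(L - z)⁻¹ = -z^{-m} • (L⁻¹ * G_m(zL⁻¹) * (L^{-m} - z^{-m})⁻¹)` and
`(L - z)⁻¹ = -z⁻¹ • 1 - (m z^{-1-m}) • (L^{-m} - z^{-m})⁻¹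
  - z⁻¹ • ∑_{k=1}^{m-1} G_k(zL⁻¹) * G_m(zL⁻¹)⁻¹`. -/
theorem stmt3 {A : Type*} [NormedRing A] [NormedAlgebra ℂ A] [CompleteSpace A]
    (m : ℕ) (hm : 1 ≤ m) (θ0 : ℝ) (hθ0 : 0 < θ0) (hθ0' : θ0 < Real.pi / (2 * m))
    (L : A) (hL : IsUnit L) (hσ : spectrum ℂ L ⊆ sector θ0) :
    ∀ z ∈ sector θ0, z ∉ spectrum ℂ L →
      IsUnit (L - z • (1 : A)) ∧
      IsUnit ((Ring.inverse L) ^ m - (z ^ (-(m : ℤ))) • (1 : A)) ∧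
      IsUnit (∑ k ∈ Finset.range m, (z • Ring.inverse L) ^ k) ∧
      Ring.inverse (L - z • (1 : A)) =
        (-(z ^ (-(m : ℤ)))) •
          (Ring.inverse L * (∑ k ∈ Finset.range m, (z • Ring.inverse L) ^ k) *
            Ring.inverse ((Ring.inverse L) ^ m - (z ^ (-(m : ℤ))) • (1 : A))) ∧
      Ring.inverse (L - z • (1 : A)) =
        (-z⁻¹) • (1 : A)
          - ((m : ℂ) * z ^ (-1 - (m : ℤ))) •
              Ring.inverse ((Ring.inverse L) ^ m - (z ^ (-(m : ℤ))) • (1 : A))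
          - z⁻¹ •
              ∑ k ∈ Finset.Ico 1 m,
                (∑ j ∈ Finset.range k, (z • Ring.inverse L) ^ j) *
                  Ring.inverse (∑ j ∈ Finset.range m, (z • Ring.inverse L) ^ j) := by
  have hπ : Real.pi / (2 * m) ≤ Real.pi / m := by gcongr; linarith
  exact stmt3_general hm (hθ0'.trans_le hπ) hL hσ
end

section
/- Let V : ℝ³ → ℂ be measurable and short-range with exponent δ > 3. Then ∫∫_{ℝ³×ℝ³} V(x) V(y) · cos(2μ |x − y|) · |x − y|^{-1} dx dy tends to 0 as the real parameter μ tends to +∞. -/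
open MeasureTheory Filter Topology

/-- Three-dimensional Euclidean space `ℝ³`. -/
abbrev E3 : Type := EuclideanSpace ℝ (Fin 3)

/-- The Japanese bracket `⟨x⟩ := (1 + |x|²)^{1/2}`. -/
noncomputable def jap (x : E3) : ℝ := Real.sqrt (1 + ‖x‖ ^ 2)

/-!
The integral is an oscillatory integral over `E × E` with phase `φ(x, y) = ‖x - y‖`, and all that
matters about `φ` is that it pulls null sets of `ℝ` back to null sets. For such a phase, the
integral of `cos (t φ)` over a set of finite measure is the Fourier transform of a finite absolutely
continuous measure on `ℝ`, so it vanishes at infinity by the Riemann–Lebesgue lemma; linearity and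
`L¹`-density replace the set by an arbitrary integrable amplitude. The amplitude
`V(x) W(y) ‖x - y‖⁻ˢ` is integrable for `V ∈ L¹ ∩ L^∞`, `W ∈ L¹` and `0 ≤ s < dim E`, because the
kernel is `L¹` on the unit ball and bounded off it.
-/

open Measure Metric Module
open scoped FourierTransform RealInnerProductSpace

section RiemannLebesgue

variable {W F : Type*} [NormedAddCommGroup W] [InnerProductSpace ℝ W] [FiniteDimensional ℝ W]
  [MeasurableSpace W] [BorelSpace W] [NormedAddCommGroup F] [NormedSpace ℂ F]

theorem tendsto_integral_exp_inner_smul_cocompact_of_absolutelyContinuous {ρ : Measure W}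
    [SigmaFinite ρ] (hρ : ρ ≪ volume) (h : W → F) :
    Tendsto (fun w : W => ∫ v, 𝐞 (-⟪v, w⟫) • h v ∂ρ) (cocompact W) (𝓝 0) := by
  refine (tendsto_integral_exp_inner_smul_cocompact fun v =>
    (ρ.rnDeriv volume v).toReal • h v).congr fun w => ?_
  rw [← integral_rnDeriv_smul hρ]
  exact integral_congr_ae (.of_forall fun v => smul_comm _ _ _)

variable {X : Type*} [MeasurableSpace X] {ν : Measure X}

theorem integrable_fourierChar_smul {θ : X → ℝ} (hθ : Measurable θ) {g : X → F}
    (hg : Integrable g ν) : Integrable (fun x => 𝐞 (θ x) • g x) ν :=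
  hg.bdd_smul (φ := fun x => (𝐞 (θ x) : ℂ)) 1 (by fun_prop)
    (.of_forall fun x => (Circle.norm_coe _).le)

theorem lipschitzWith_integral_fourierChar_smul {θ : X → ℝ} (hθ : Measurable θ) :
    LipschitzWith 1 fun g : X →₁[ν] F => ∫ x, 𝐞 (θ x) • g x ∂ν := by
  refine LipschitzWith.of_dist_le_mul fun g₁ g₂ => ?_
  rw [NNReal.coe_one, one_mul, dist_eq_norm, L1.dist_eq_integral_dist,
    ← integral_sub (integrable_fourierChar_smul hθ (L1.integrable_coeFn g₁))
      (integrable_fourierChar_smul hθ (L1.integrable_coeFn g₂))]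
  refine (norm_integral_le_integral_norm _).trans_eq (integral_congr_ae (.of_forall fun x => ?_))
  simp only [← smul_sub, Circle.norm_smul, dist_eq_norm]

theorem tendsto_integral_exp_inner_smul_indicator_cocompact {φ : X → W}
    (hφ : QuasiMeasurePreserving φ ν volume) {s : Set X} (hs : MeasurableSet s) (hνs : ν s < ⊤)
    (c : F) :
    Tendsto (fun w : W => ∫ x, 𝐞 (-⟪φ x, w⟫) • s.indicator (fun _ => c) x ∂ν)
      (cocompact W) (𝓝 0) := by
  have : IsFiniteMeasure (ν.restrict s) := isFiniteMeasure_restrict.2 hνs.ne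
  have hac : (ν.restrict s).map φ ≪ volume :=
    (hφ.mono_left restrict_le_self.absolutelyContinuous).absolutelyContinuous
  refine (tendsto_integral_exp_inner_smul_cocompact_of_absolutelyContinuous hac
    fun _ => c).congr fun w => ?_
  rw [integral_map hφ.measurable.aemeasurable (by fun_prop), ← integral_indicator hs]
  refine integral_congr_ae (.of_forall fun x => ?_)
  by_cases hx : x ∈ s <;> simp [hx]

theorem tendsto_integral_exp_inner_comp_smul_cocompact {φ : X → W}
    (hφ : QuasiMeasurePreserving φ ν volume) {g : X → F} (hg : Integrable g ν) :
    Tendsto (fun w : W => ∫ x, 𝐞 (-⟪φ x, w⟫) • g x ∂ν) (cocompact W) (𝓝 0) := by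
  have measurable_phase (w : W) : Measurable fun x => -⟪φ x, w⟫ :=
    (hφ.measurable.inner_const).neg
  refine Integrable.induction
    (fun g => Tendsto (fun w : W => ∫ x, 𝐞 (-⟪φ x, w⟫) • g x ∂ν) (cocompact W) (𝓝 0))
    (fun c s hs hνs => tendsto_integral_exp_inner_smul_indicator_cocompact hφ hs hνs c)
    (fun f g _ hf hg ihf ihg => ?add) ?closed (fun f g hfg _ ihf => ?ae) hg
  case add =>
    refine (add_zero (0 : F) ▸ ihf.add ihg).congr fun w => ?_
    rw [← integral_add (integrable_fourierChar_smul (measurable_phase w) hf)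
      (integrable_fourierChar_smul (measurable_phase w) hg)]
    simp only [Pi.add_apply, smul_add]
  case closed =>
    exact (LipschitzWith.uniformEquicontinuous _ 1 fun w =>
      lipschitzWith_integral_fourierChar_smul (measurable_phase w)).equicontinuous
      |>.isClosed_setOfPred_tendsto continuous_const
  case ae =>
    refine ihf.congr fun w => integral_congr_ae ?_
    filter_upwards [hfg] with x hx
    rw [hx]

theorem fourierChar_add_fourierChar_neg (x : ℝ) :
    (𝐞 x : ℂ) + 𝐞 (-x) = 2 * (Real.cos (2 * Real.pi * x) : ℝ) := by
  simp only [Real.fourierChar_apply, mul_neg, Complex.ofReal_neg, Complex.ofReal_cos,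
    Complex.two_cos]

theorem tendsto_integral_cos_smul_cocompact {φ : X → ℝ}
    (hφ : QuasiMeasurePreserving φ ν volume) {g : X → F} (hg : Integrable g ν) :
    Tendsto (fun t : ℝ => ∫ x, Real.cos (t * φ x) • g x ∂ν) (cocompact ℝ) (𝓝 0) := by
  have hexp (c : ℝ) (hc : c ≠ 0) :
      Tendsto (fun t : ℝ => ∫ x, 𝐞 (t * c * φ x) • g x ∂ν) (cocompact ℝ) (𝓝 0) := by
    refine ((tendsto_integral_exp_inner_comp_smul_cocompact hφ hg).comp
      (Homeomorph.mulRight₀ (-c) (neg_ne_zero.2 hc)).isClosedEmbedding.tendsto_cocompact).congr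
      fun t => ?_
    simp [mul_comm]
  have hc : (2 * Real.pi)⁻¹ ≠ 0 := by positivity
  have hsum := ((hexp _ hc).add (hexp _ (neg_ne_zero.2 hc))).const_smul (2⁻¹ : ℂ)
  rw [add_zero, smul_zero] at hsum
  refine hsum.congr fun t => ?_
  have integrable_exp (c : ℝ) : Integrable (fun x => 𝐞 (t * c * φ x) • g x) ν :=
    integrable_fourierChar_smul (hφ.measurable.const_mul _) hg
  rw [← integral_add (integrable_exp _) (integrable_exp _), ← integral_smul]
  refine integral_congr_ae (.of_forall fun x => ?_)
  have hphase : 2 * Real.pi * (t * (2 * Real.pi)⁻¹ * φ x) = t * φ x := by field_simp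
  simp only [mul_neg, neg_mul, Circle.smul_def, ← add_smul, fourierChar_add_fourierChar_neg,
    hphase, smul_smul]
  rw [inv_mul_cancel_left₀ two_ne_zero, Complex.coe_smul]

end RiemannLebesgue

section Norm

variable {E : Type*} [NormedAddCommGroup E] [NormedSpace ℝ E] [FiniteDimensional ℝ E]
  [MeasurableSpace E] [BorelSpace E] (ν : Measure E) [ν.IsAddHaarMeasure]

theorem quasiMeasurePreserving_norm [Nontrivial E] :
    QuasiMeasurePreserving (fun x : E => ‖x‖) ν volume := by
  have hval : QuasiMeasurePreserving ((↑) : Set.Ioi (0 : ℝ) → ℝ)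
      (volumeIoiPow (finrank ℝ E - 1)) volume :=
    ((measurePreserving_subtype_coe measurableSet_Ioi).quasiMeasurePreserving.mono_right
      restrict_le_self.absolutelyContinuous).mono_left (withDensity_absolutelyContinuous _ _)
  have hpolar : QuasiMeasurePreserving (fun x : ({0}ᶜ : Set E) => ‖(x : E)‖)
      (ν.comap (↑)) volume := by
    simpa only [Function.comp_def, homeomorphUnitSphereProd_apply_snd_coe] using
      hval.comp (quasiMeasurePreserving_snd.comp
        ν.measurePreserving_homeomorphUnitSphereProd.quasiMeasurePreserving)
  refine ⟨measurable_norm, ?_⟩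
  rw [← restrict_compl_singleton (μ := ν) 0,
    ← map_comap_subtype_coe (measurableSet_singleton (0 : E)).compl,
    map_map measurable_norm measurable_subtype_coe]
  exact hpolar.absolutelyContinuous

theorem quasiMeasurePreserving_norm_sub [Nontrivial E] :
    QuasiMeasurePreserving (fun p : E × E => ‖p.1 - p.2‖) (ν.prod ν) volume :=
  (quasiMeasurePreserving_norm ν).comp (quasiMeasurePreserving_sub_of_right_invariant ν ν)

end Norm

section Kernel

variable {G 𝕜 : Type*} [AddGroup G] [MeasurableSpace G] [MeasurableAdd₂ G] [MeasurableNeg G]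
  {ν : Measure G} [SFinite ν] [ν.IsAddRightInvariant] [RCLike 𝕜] {f g k : G → 𝕜} {C : ℝ}

theorem integrable_mul_mul_comp_sub_of_integrable (hf : AEStronglyMeasurable f ν)
    (hfC : ∀ᵐ x ∂ν, ‖f x‖ ≤ C) (hg : Integrable g ν) (hk : Integrable k ν) :
    Integrable (fun p : G × G => f p.1 * g p.2 * k (p.1 - p.2)) (ν.prod ν) := by
  simp only [mul_assoc]
  exact (hg.convolution_integrand (ContinuousLinearMap.mul ℝ 𝕜) hk).bdd_mul hf.comp_fst
    (quasiMeasurePreserving_fst.ae hfC)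

theorem integrable_mul_mul_comp_sub_of_ae_bound (hf : Integrable f ν) (hg : Integrable g ν)
    (hk : AEStronglyMeasurable k ν) (hkC : ∀ᵐ x ∂ν, ‖k x‖ ≤ C) :
    Integrable (fun p : G × G => f p.1 * g p.2 * k (p.1 - p.2)) (ν.prod ν) := by
  have hsub : QuasiMeasurePreserving (fun p : G × G => p.1 - p.2) (ν.prod ν) ν :=
    quasiMeasurePreserving_sub_of_right_invariant ν ν
  exact (hf.mul_prod hg).mul_bdd (hk.comp_quasiMeasurePreserving hsub) (hsub.ae hkC)

theorem integrable_mul_mul_comp_sub {D : ℝ} {s : Set G} (hf : Integrable f ν)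
    (hfC : ∀ᵐ x ∂ν, ‖f x‖ ≤ C) (hg : Integrable g ν) (hs : MeasurableSet s)
    (hk : AEStronglyMeasurable k ν) (hks : IntegrableOn k s ν)
    (hkD : ∀ᵐ x ∂ν.restrict sᶜ, ‖k x‖ ≤ D) :
    Integrable (fun p : G × G => f p.1 * g p.2 * k (p.1 - p.2)) (ν.prod ν) := by
  have hbound : ∀ᵐ x ∂ν, ‖sᶜ.indicator k x‖ ≤ |D| := by
    filter_upwards [(ae_restrict_iff' hs.compl).1 hkD] with x hx
    by_cases hxs : x ∈ sᶜ
    · simpa only [Set.indicator_of_mem hxs] using (hx hxs).trans (le_abs_self D)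
    · simp only [Set.indicator_of_notMem hxs, norm_zero, abs_nonneg]
  refine ((integrable_mul_mul_comp_sub_of_integrable hf.aestronglyMeasurable hfC hg
    (hks.integrable_indicator hs)).add
    (integrable_mul_mul_comp_sub_of_ae_bound hf hg (hk.indicator hs.compl) hbound)).congr
    (.of_forall fun p => ?_)
  simp only [Pi.add_apply, ← mul_add]
  rw [← Pi.add_apply (s.indicator k), Set.indicator_self_add_compl]

end Kernel

section RieszKernel

variable {E : Type*} [NormedAddCommGroup E] [NormedSpace ℝ E] [FiniteDimensional ℝ E]
  [MeasurableSpace E] [BorelSpace E] {ν : Measure E} [ν.IsAddHaarMeasure]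
  {V W : E → ℂ} {C s : ℝ}

theorem integrable_mul_mul_norm_sub_rpow_neg (hV : Integrable V ν) (hVC : ∀ᵐ x ∂ν, ‖V x‖ ≤ C)
    (hW : Integrable W ν) (hs₀ : 0 ≤ s) (hs : s < finrank ℝ E) :
    Integrable (fun p : E × E => V p.1 * W p.2 * ((‖p.1 - p.2‖ ^ (-s) : ℝ) : ℂ))
      (ν.prod ν) := by
  have hdim : 1 ≤ finrank ℝ E := Nat.cast_pos.1 (hs₀.trans_lt hs)
  have hnorm (z : E) : ‖((‖z‖ ^ (-s) : ℝ) : ℂ)‖ = ‖z‖ ^ (-s) := by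
    rw [Complex.norm_real, Real.norm_of_nonneg (by positivity)]
  have hmeas : AEStronglyMeasurable (fun z : E => ((‖z‖ ^ (-s) : ℝ) : ℂ)) ν :=
    Measurable.aestronglyMeasurable (by fun_prop)
  have hnear : IntegrableOn (fun z : E => ((‖z‖ ^ (-s) : ℝ) : ℂ)) (ball 0 1) ν :=
    integrableOn_ball_of_norm_le_rpow (C := 1) hdim hs
      (.of_forall fun z => by rw [hnorm, one_mul]) hmeas
  have hfar : ∀ᵐ z ∂ν.restrict (ball 0 1)ᶜ, ‖((‖z‖ ^ (-s) : ℝ) : ℂ)‖ ≤ 1 := by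
    filter_upwards [ae_restrict_mem measurableSet_ball.compl] with z hz
    rw [hnorm]
    exact Real.rpow_le_one_of_one_le_of_nonpos (by simpa using hz) (neg_nonpos.2 hs₀)
  exact integrable_mul_mul_comp_sub (k := fun z : E => ((‖z‖ ^ (-s) : ℝ) : ℂ)) hV hVC
    hW measurableSet_ball hmeas hnear hfar

theorem stmt14_general (hV : Integrable V ν) (hVC : ∀ᵐ x ∂ν, ‖V x‖ ≤ C) (hW : Integrable W ν)
    (hs₀ : 0 ≤ s) (hs : s < finrank ℝ E) :
    Tendsto (fun μ : ℝ => ∫ p : E × E,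
        V p.1 * W p.2 * ((Real.cos (2 * μ * ‖p.1 - p.2‖) : ℝ) : ℂ)
          * ((‖p.1 - p.2‖ ^ (-s) : ℝ) : ℂ) ∂ν.prod ν)
      atTop (𝓝 0) := by
  have : Nontrivial E := nontrivial_of_finrank_pos (R := ℝ) (Nat.cast_pos.1 (hs₀.trans_lt hs))
  have hfreq : Tendsto (fun μ : ℝ => 2 * μ) atTop (cocompact ℝ) :=
    (tendsto_id.const_mul_atTop two_pos).mono_right atTop_le_cocompact
  refine ((tendsto_integral_cos_smul_cocompact (quasiMeasurePreserving_norm_sub ν)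
    (integrable_mul_mul_norm_sub_rpow_neg hV hVC hW hs₀ hs)).comp hfreq).congr fun μ =>
      integral_congr_ae (.of_forall fun p => ?_)
  simp only [Complex.real_smul]
  ring

end RieszKernel

section ShortRange

variable {F : Type*} [NormedAddCommGroup F] {V : E3 → F} {δ M : ℝ}

theorem integrable_jap_rpow_neg (hδ : 3 < δ) : Integrable fun x : E3 => jap x ^ (-δ) := by
  refine (integrable_rpow_neg_one_add_norm_sq (E := E3) (r := δ)
    (by simpa using hδ)).congr (.of_forall fun x => ?_)
  simp only [jap, Real.sqrt_eq_rpow]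
  rw [← Real.rpow_mul (by positivity)]
  ring_nf

theorem jap_rpow_neg_le_one (hδ : 0 ≤ δ) (x : E3) : jap x ^ (-δ) ≤ 1 :=
  Real.rpow_le_one_of_one_le_of_nonpos
    (Real.one_le_sqrt.2 (le_add_of_nonneg_right (sq_nonneg _))) (neg_nonpos.2 hδ)

theorem integrable_of_norm_le_mul_jap_rpow_neg (hδ : 3 < δ) (hV : AEStronglyMeasurable V)
    (hbound : ∀ x, ‖V x‖ ≤ M * jap x ^ (-δ)) : Integrable V :=
  ((integrable_jap_rpow_neg hδ).const_mul M).mono' hV (.of_forall hbound)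

theorem norm_le_of_norm_le_mul_jap_rpow_neg (hδ : 0 ≤ δ) (hM : 0 ≤ M)
    (hbound : ∀ x, ‖V x‖ ≤ M * jap x ^ (-δ)) (x : E3) : ‖V x‖ ≤ M :=
  (hbound x).trans (mul_le_of_le_one_right hM (jap_rpow_neg_le_one hδ x))

end ShortRange

/-- Let `V : ℝ³ → ℂ` be measurable and short-range with exponent
`δ > 3`. Then `∫∫ V(x)V(y) cos(2μ|x-y|) |x-y|⁻¹ dx dy → 0` as `μ → +∞`. -/
theorem stmt14 (δ : ℝ) (hδ : 3 < δ) (V : E3 → ℂ) (hV : Measurable V)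
    (M : ℝ) (hM : 0 < M) (hbound : ∀ x : E3, ‖V x‖ ≤ M * jap x ^ (-δ)) :
    Tendsto (fun μ : ℝ =>
        ∫ p : E3 × E3,
          V p.1 * V p.2 * ((Real.cos (2 * μ * ‖p.1 - p.2‖) : ℝ) : ℂ)
            * ((‖p.1 - p.2‖⁻¹ : ℝ) : ℂ))
      atTop (𝓝 0) := by
  have hV_int := integrable_of_norm_le_mul_jap_rpow_neg hδ hV.aestronglyMeasurable hbound
  have hV_le := norm_le_of_norm_le_mul_jap_rpow_neg (by linarith) hM.le hbound
  simpa only [Real.rpow_neg_one, ← volume_eq_prod] using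
    stmt14_general hV_int (.of_forall hV_le) hV_int zero_le_one (by simp)
end
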